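/- arXiv:2305.00653 — 6 statements merged into one kernel-verified Lean document; each statement's English description precedes it below -/
import Mathlib

section
/- Let N ≥ 1, let S be a finite family of subsets p ⊆ {1,…,N} each with |p| ≥ 2, and for each p ∈ S and i ∈ p let α_{p→i} ∈ ℝ satisfy Σ_{i∈p} α_{p→i} = 0, and define F_i(x) = Σ_{p∈S : i∈p} α_{p→i} ∏_{j∈p\{i}} x_j. If x : ℝ → ℝ^N is differentiable and satisfies x_i'(t) = F_i(x(t)) for all t ∈ ℝ and all i, then the function t ↦ Σ_{i=1}^N x_i(t)² is constant. -/
/-!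
Multiplying `F_i` by `x_i` completes each truncated monomial `∏_{j ∈ p \ {i}} x_j` to the full
monomial `∏_{j ∈ p} x_j`, which no longer depends on `i`. In `⟨x, F x⟩` this monomial therefore has
coefficient `∑_{i ∈ p} α_{p→i} = 0`: the field is tangent to the spheres centred at the origin.
-/

open Finset WithLp

section KoopmanField

variable {ι R : Type*} [DecidableEq ι] [CommSemiring R]

/-- The vector field `F` of a system solvable with the Koopman–von Neumann embedding, where
`α p i` is the coupling constant `α_{p→i}`, with arbitrary values when `i ∉ p`; the balance condition
`∑ i ∈ p, α p i = 0` is imposed separately. -/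
def koopmanField (S : Finset (Finset ι)) (α : Finset ι → ι → R) (x : ι → R) (i : ι) : R :=
  ∑ p ∈ S with i ∈ p, α p i * ∏ j ∈ p.erase i, x j

theorem mul_koopmanField (S : Finset (Finset ι)) (α : Finset ι → ι → R) (x : ι → R) (i : ι) :
    x i * koopmanField S α x i = ∑ p ∈ S with i ∈ p, α p i * ∏ j ∈ p, x j := by
  rw [koopmanField, mul_sum]
  refine sum_congr rfl fun p hp => ?_
  rw [mul_left_comm, mul_prod_erase p x (mem_filter.mp hp).2]

variable [Fintype ι]

theorem dotProduct_koopmanField (S : Finset (Finset ι)) (α : Finset ι → ι → R) (x : ι → R) :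
    x ⬝ᵥ koopmanField S α x = ∑ p ∈ S, (∑ i ∈ p, α p i) * ∏ j ∈ p, x j := by
  calc
    x ⬝ᵥ koopmanField S α x = ∑ i, ∑ p ∈ S with i ∈ p, α p i * ∏ j ∈ p, x j :=
      sum_congr rfl fun i _ => mul_koopmanField S α x i
    _ = ∑ p ∈ S, ∑ i ∈ p, α p i * ∏ j ∈ p, x j :=
      sum_comm' fun i p => by simp [and_comm]
    _ = ∑ p ∈ S, (∑ i ∈ p, α p i) * ∏ j ∈ p, x j :=
      sum_congr rfl fun p _ => (sum_mul p (α p) _).symm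

theorem dotProduct_koopmanField_eq_zero {S : Finset (Finset ι)} {α : Finset ι → ι → R}
    (hα : ∀ p ∈ S, ∑ i ∈ p, α p i = 0) (x : ι → R) : x ⬝ᵥ koopmanField S α x = 0 := by
  rw [dotProduct_koopmanField]
  exact sum_eq_zero fun p hp => by rw [hα p hp, zero_mul]

end KoopmanField

theorem norm_sq_eq_of_inner_hasDerivAt_eq_zero {E : Type*} [NormedAddCommGroup E]
    [InnerProductSpace ℝ E] {x v : ℝ → E} (hx : ∀ t, HasDerivAt x (v t) t)
    (hv : ∀ t, inner ℝ (x t) (v t) = 0) (s t : ℝ) : ‖x s‖ ^ 2 = ‖x t‖ ^ 2 := by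
  have hderiv (t : ℝ) : HasDerivAt (fun s => ‖x s‖ ^ 2) 0 t := by
    simpa only [hv t, mul_zero] using (hx t).norm_sq
  exact is_const_of_deriv_eq_zero (fun t => (hderiv t).differentiableAt)
    (fun t => (hderiv t).deriv) s t

theorem sum_sq_eq_of_dotProduct_hasDerivAt_eq_zero {ι : Type*} [Fintype ι] {x v : ℝ → ι → ℝ}
    (hx : ∀ t, HasDerivAt x (v t) t) (hv : ∀ t, x t ⬝ᵥ v t = 0) (s t : ℝ) :
    ∑ i, x s i ^ 2 = ∑ i, x t i ^ 2 := by
  have hderiv (t : ℝ) : HasDerivAt (fun s => toLp 2 (x s)) (toLp 2 (v t)) t :=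
    (PiLp.hasFDerivAt_toLp (𝕜 := ℝ) 2 (x t)).comp_hasDerivAt t (hx t)
  have horth (t : ℝ) : inner ℝ (toLp 2 (x t)) (toLp 2 (v t)) = 0 := by
    rw [EuclideanSpace.inner_toLp_toLp, star_trivial, dotProduct_comm, hv t]
  simpa only [EuclideanSpace.real_norm_sq_eq] using
    norm_sq_eq_of_inner_hasDerivAt_eq_zero hderiv horth s t

/-- Along any solution of a system of ODEs solvable with the
Koopman–von Neumann embedding (Definition 2 of the paper), the quantity
`∑ i, x_i(t)^2` is constant in time. -/
theorem koopman_vonNeumann_radius_conserved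
    (N : ℕ) (hN : 1 ≤ N)
    (S : Finset (Finset (Fin N)))
    (α : Finset (Fin N) → Fin N → ℝ)
    (hcard : ∀ p ∈ S, 2 ≤ p.card)
    (hα : ∀ p ∈ S, ∑ i ∈ p, α p i = 0)
    (F : (Fin N → ℝ) → Fin N → ℝ)
    (hF : ∀ x i, F x i =
      ∑ p ∈ S.filter (fun p => i ∈ p), α p i * ∏ j ∈ p.erase i, x j)
    (x : ℝ → Fin N → ℝ)
    (hx : ∀ (t : ℝ) (i : Fin N), HasDerivAt (fun s => x s i) (F (x t) i) t)
    (s t : ℝ) :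
    ∑ i, (x s i) ^ 2 = ∑ i, (x t i) ^ 2 := by
  obtain rfl : F = koopmanField S α := funext₂ hF
  exact sum_sq_eq_of_dotProduct_hasDerivAt_eq_zero (fun t => hasDerivAt_pi.mpr (hx t))
    (fun t => dotProduct_koopmanField_eq_zero hα (x t)) s t
end

section
/- Let ι be a finite type, deg : ι → ℕ, and d ≥ 1. Let A, B ∈ Matrix ι ι ℂ with A Hermitian, A_{jk} = 0 whenever deg j ≠ deg k, and B_{jk} = 0 whenever |deg j − deg k| > d. Let φ, ψ ∈ ℂ^ι be unit vectors with φ supported on {j : deg j = l} and ψ supported on {j : deg j = l'}. For t ∈ ℝ set H(t) = e^{𝕚At} B e^{−𝕚At}. Then for every n ∈ ℕ and all reals t₁,…,t_n: if n·d < |l − l'| then ⟨φ, H(t_n)⋯H(t₁) ψ⟩ = 0, and in all cases |⟨φ, H(t_n)⋯H(t₁) ψ⟩| ≤ ‖B‖ⁿ, where ‖B‖ is the ℓ² operator norm. -/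
open Matrix

/-- The interaction-picture operator `H(s) = e^{𝕚 A s} B e^{-𝕚 A s}`. -/
noncomputable def interactionPicture {ι : Type*} [Fintype ι] [DecidableEq ι]
    (A B : Matrix ι ι ℂ) (s : ℝ) : Matrix ι ι ℂ :=
  NormedSpace.exp ((Complex.I * (s : ℂ)) • A) * B *
    NormedSpace.exp ((-(Complex.I * (s : ℂ))) • A)

/-!
A matrix preserving the grading commutes with the projections onto the degree blocks, hence so does
its exponential. Each `H(s)` therefore shifts degrees no further than `B` does, and since shifts add
up under products, a product of `n` factors cannot connect degrees more than `n * d` apart. The norm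
bound holds because `H(s)` differs from `B` only by unitary factors on either side.
-/

section Propagation

variable {ι X R : Type*} [PseudoMetricSpace X] {f : ι → X} {r s : ℝ}

/-- Finite propagation, as in coarse geometry: when the indices are placed in a metric space by `f`,
the entries of `M` vanish between indices more than `r` apart. For a degree function `f : ι → ℕ`
this says that `M` shifts the degree by at most `r`, and for `r = 0` that `M` preserves it. -/
def HasPropagationLE [Zero R] (f : ι → X) (r : ℝ) (M : Matrix ι ι R) : Prop :=
  ∀ ⦃j k⦄, r < dist (f j) (f k) → M j k = 0

namespace HasPropagationLE

theorem zero_iff {Y : Type*} [MetricSpace Y] [Zero R] {f : ι → Y} {M : Matrix ι ι R} :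
    HasPropagationLE f 0 M ↔ ∀ j k, f j ≠ f k → M j k = 0 := by
  simp only [HasPropagationLE, dist_pos]

theorem natCast_iff [Zero R] {deg : ι → ℕ} {d : ℕ} {M : Matrix ι ι R} :
    HasPropagationLE deg d M ↔ ∀ j k, (d : ℤ) < |(deg j : ℤ) - (deg k : ℤ)| → M j k = 0 := by
  simp only [HasPropagationLE, Nat.dist_eq]
  norm_cast

theorem one [Zero R] [One R] [DecidableEq ι] : HasPropagationLE f 0 (1 : Matrix ι ι R) :=
  fun j k hjk => one_apply_ne <| by
    rintro rfl
    exact hjk.ne' (dist_self _)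

theorem smul {S : Type*} [Zero R] [SMulZeroClass S R] {M : Matrix ι ι R}
    (hM : HasPropagationLE f r M) (c : S) : HasPropagationLE f r (c • M) :=
  fun j k h => by rw [Matrix.smul_apply, hM h, smul_zero]

theorem mul [Fintype ι] [NonUnitalNonAssocSemiring R] {M N : Matrix ι ι R}
    (hM : HasPropagationLE f r M) (hN : HasPropagationLE f s N) :
    HasPropagationLE f (r + s) (M * N) := by
  intro j k hjk
  rw [mul_apply]
  refine Finset.sum_eq_zero fun i _ => ?_
  have hi : r < dist (f j) (f i) ∨ s < dist (f i) (f k) :=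
    lt_or_lt_of_add_lt_add (hjk.trans_le (dist_triangle _ _ _))
  rcases hi with hji | hik
  · rw [hM hji, zero_mul]
  · rw [hN hik, mul_zero]

theorem list_prod [Fintype ι] [DecidableEq ι] [Semiring R] {L : List (Matrix ι ι R)}
    (hL : ∀ M ∈ L, HasPropagationLE f r M) : HasPropagationLE f (L.length * r) L.prod := by
  induction L with
  | nil => simpa using one
  | cons M L ih =>
    rw [List.forall_mem_cons] at hL
    rw [List.length_cons, List.prod_cons, Nat.cast_succ, add_one_mul, add_comm]
    exact hL.1.mul (ih hL.2)

theorem commute_diagonal [Fintype ι] [DecidableEq ι] [Semiring R] {M : Matrix ι ι R}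
    (hM : HasPropagationLE f 0 M) {v : ι → R} (hv : ∀ i j, dist (f i) (f j) = 0 → v i = v j)
    (hcomm : ∀ i a, Commute (v i) a) : Commute M (diagonal v) := by
  ext i j
  rw [mul_diagonal, diagonal_mul, (hcomm i _).eq]
  rcases (dist_nonneg (x := f i) (y := f j)).eq_or_lt with hij | hij
  · rw [hv i j hij.symm]
  · simp only [hM hij, zero_mul]

theorem exp [Fintype ι] [DecidableEq ι] [Ring R] [TopologicalSpace R] [IsTopologicalRing R]
    [T2Space R] {M : Matrix ι ι R} (hM : HasPropagationLE f 0 M) :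
    HasPropagationLE f 0 (NormedSpace.exp M) := by
  classical
  intro j k hjk
  let χ : ι → R := fun i => if dist (f k) (f i) = 0 then 1 else 0
  have hχ : Commute M (diagonal χ) := by
    refine hM.commute_diagonal (fun i i' hii' => ?_) fun i a => ?_
    · simp only [χ, PseudoMetricSpace.dist_eq_of_dist_zero (f k) hii']
    · simp only [χ]
      split_ifs
      exacts [.one_left a, .zero_left a]
  have hentry : NormedSpace.exp M j k * χ k = χ j * NormedSpace.exp M j k := by
    rw [← mul_diagonal, ← diagonal_mul, hχ.exp_left.eq]
  have hkj : dist (f k) (f j) ≠ 0 := dist_comm (f k) (f j) ▸ hjk.ne'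
  simpa only [χ, dist_self, if_true, if_neg hkj, mul_one, zero_mul] using hentry

theorem inner_toEuclideanCLM_eq_zero {𝕜 : Type*} [RCLike 𝕜] [Fintype ι] [DecidableEq ι]
    {M : Matrix ι ι 𝕜} (hM : HasPropagationLE f r M) {φ ψ : EuclideanSpace 𝕜 ι}
    (hφψ : ∀ j k, φ j ≠ 0 → ψ k ≠ 0 → r < dist (f j) (f k)) :
    inner 𝕜 φ (toEuclideanCLM (𝕜 := 𝕜) M ψ) = 0 := by
  rw [PiLp.inner_apply]
  refine Finset.sum_eq_zero fun j _ => ?_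
  by_cases hφ : φ j = 0
  · rw [hφ, inner_zero_left]
  suffices hMψ : ∑ k, M j k * ψ k = 0 by
    rw [ofLp_toEuclideanCLM, mulVec, dotProduct, hMψ, inner_zero_right]
  refine Finset.sum_eq_zero fun k _ => ?_
  by_cases hψ : ψ k = 0
  · rw [hψ, mul_zero]
  · rw [hM (hφψ j k hφ hψ), zero_mul]

theorem interactionPicture [Fintype ι] [DecidableEq ι] {A B : Matrix ι ι ℂ}
    (hA : HasPropagationLE f 0 A) (hB : HasPropagationLE f r B) (s : ℝ) :
    HasPropagationLE f r (interactionPicture A B s) := by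
  have hexp (c : ℂ) : HasPropagationLE f 0 (NormedSpace.exp (c • A)) := (hA.smul c).exp
  simpa only [_root_.interactionPicture, zero_add, add_zero] using
    ((hexp (Complex.I * s)).mul hB).mul (hexp (-(Complex.I * s)))

theorem prod_interactionPicture [Fintype ι] [DecidableEq ι] {A B : Matrix ι ι ℂ}
    (hA : HasPropagationLE f 0 A) (hB : HasPropagationLE f r B) {n : ℕ} (t : Fin n → ℝ) :
    HasPropagationLE f (n * r) (List.ofFn fun k => _root_.interactionPicture A B (t k)).prod := by
  simpa only [List.length_ofFn] using
    list_prod ((List.forall_mem_ofFn_iff (P := HasPropagationLE f r)).2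
      fun k => hA.interactionPicture hB (t k))

end HasPropagationLE

end Propagation

section Norm

open scoped Matrix.Norms.L2Operator

theorem norm_list_prod_le_pow_length {R : Type*} [SeminormedRing R] (hone : ‖(1 : R)‖ ≤ 1)
    {c : ℝ} {L : List R} (hL : ∀ a ∈ L, ‖a‖ ≤ c) : ‖L.prod‖ ≤ c ^ L.length := by
  induction L with
  | nil => simpa using hone
  | cons a L ih =>
    rw [List.forall_mem_cons] at hL
    have hc : 0 ≤ c := (norm_nonneg a).trans hL.1
    calc ‖(a :: L).prod‖ ≤ ‖a‖ * ‖L.prod‖ := norm_mul_le _ _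
      _ ≤ c * c ^ L.length := by gcongr; exacts [hL.1, ih hL.2]
      _ = c ^ (a :: L).length := (pow_succ' _ _).symm

theorem exp_I_mul_ofReal_smul_mem_unitary {𝔸 : Type*} [NormedRing 𝔸] [NormedAlgebra ℂ 𝔸]
    [StarRing 𝔸] [ContinuousStar 𝔸] [CompleteSpace 𝔸] [StarModule ℂ 𝔸] {a : 𝔸}
    (ha : IsSelfAdjoint a) (s : ℝ) :
    NormedSpace.exp ((Complex.I * (s : ℂ)) • a) ∈ unitary 𝔸 := by
  have hsa : IsSelfAdjoint ((s : ℂ) • a) := IsSelfAdjoint.smul (Complex.conj_ofReal s) ha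
  rw [mul_smul]
  exact (selfAdjoint.expUnitary ⟨_, hsa⟩).2

variable {ι : Type*} [Fintype ι] [DecidableEq ι]

theorem l2_opNorm_one_le {𝕜 : Type*} [RCLike 𝕜] : ‖(1 : Matrix ι ι 𝕜)‖ ≤ 1 := by
  rw [cstar_norm_def, map_one]
  exact ContinuousLinearMap.norm_id_le

theorem norm_inner_toEuclideanCLM_le {𝕜 : Type*} [RCLike 𝕜] (M : Matrix ι ι 𝕜)
    (φ ψ : EuclideanSpace 𝕜 ι) :
    ‖inner 𝕜 φ (toEuclideanCLM (𝕜 := 𝕜) M ψ)‖ ≤ ‖φ‖ * (‖M‖ * ‖ψ‖) :=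
  (norm_inner_le_norm _ _).trans <| by gcongr; exact ContinuousLinearMap.le_opNorm _ _

theorem norm_interactionPicture {A : Matrix ι ι ℂ} (hA : A.IsHermitian) (B : Matrix ι ι ℂ)
    (s : ℝ) : ‖interactionPicture A B s‖ = ‖B‖ := by
  have hexp := exp_I_mul_ofReal_smul_mem_unitary hA.isSelfAdjoint s
  have hexp_neg := exp_I_mul_ofReal_smul_mem_unitary hA.isSelfAdjoint (-s)
  rw [Complex.ofReal_neg, mul_neg] at hexp_neg
  rw [interactionPicture, CStarRing.norm_mul_mem_unitary _ hexp_neg,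
    CStarRing.norm_mem_unitary_mul _ hexp]

theorem norm_prod_interactionPicture_le {A : Matrix ι ι ℂ} (hA : A.IsHermitian)
    (B : Matrix ι ι ℂ) {n : ℕ} (t : Fin n → ℝ) :
    ‖(List.ofFn fun k => interactionPicture A B (t k)).prod‖ ≤ ‖B‖ ^ n := by
  simpa only [List.length_ofFn] using
    norm_list_prod_le_pow_length l2_opNorm_one_le
      ((List.forall_mem_ofFn_iff (P := (‖·‖ ≤ ‖B‖))).2
        fun k => (norm_interactionPicture hA B (t k)).le)

end Norm

theorem interaction_picture_amplitude_bound_general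
    {ι X : Type*} [Fintype ι] [DecidableEq ι] [PseudoMetricSpace X]
    (f : ι → X) (r : ℝ) (A B : Matrix ι ι ℂ) (hA : A.IsHermitian)
    (hAf : HasPropagationLE f 0 A) (hBf : HasPropagationLE f r B)
    (φ ψ : EuclideanSpace ℂ ι) (n : ℕ) (t : Fin n → ℝ) :
    ((∀ j k, φ j ≠ 0 → ψ k ≠ 0 → n * r < dist (f j) (f k)) →
      inner ℂ φ (toEuclideanCLM (𝕜 := ℂ)
        (List.ofFn fun k => interactionPicture A B (t k)).prod ψ) = 0) ∧
    ‖inner ℂ φ (toEuclideanCLM (𝕜 := ℂ)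
        (List.ofFn fun k => interactionPicture A B (t k)).prod ψ)‖ ≤
      ‖φ‖ * (‖toEuclideanCLM (𝕜 := ℂ) B‖ ^ n * ‖ψ‖) := by
  refine ⟨(hAf.prod_interactionPicture hBf t).inner_toEuclideanCLM_eq_zero,
    (norm_inner_toEuclideanCLM_le _ φ ψ).trans ?_⟩
  gcongr
  exact norm_prod_interactionPicture_le hA B t

/-- finite-dimensional graded version of Lemma 2 of the paper.
If `A` is Hermitian and preserves the grading `deg`, `B` shifts the grading by at most `d`,
and `φ, ψ` are unit vectors supported in degrees `l` and `l'` respectively, then the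
transition amplitude `⟨φ, H(t_n) ⋯ H(t₁) ψ⟩` (with `H(s) = e^{𝕚As} B e^{-𝕚As}`) vanishes
when `n·d < |l - l'|` and in all cases is bounded by `‖B‖ⁿ` in the ℓ² operator norm. -/
theorem interaction_picture_amplitude_bound
    {ι : Type*} [Fintype ι] [DecidableEq ι]
    (deg : ι → ℕ) (d : ℕ) (hd : 1 ≤ d)
    (A B : Matrix ι ι ℂ) (hA : A.IsHermitian)
    (hAdeg : ∀ j k, deg j ≠ deg k → A j k = 0)
    (hBdeg : ∀ j k, (d : ℤ) < |(deg j : ℤ) - (deg k : ℤ)| → B j k = 0)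
    (l l' : ℕ)
    (φ ψ : EuclideanSpace ℂ ι) (hφ : ‖φ‖ = 1) (hψ : ‖ψ‖ = 1)
    (hφsupp : ∀ j, deg j ≠ l → φ j = 0)
    (hψsupp : ∀ j, deg j ≠ l' → ψ j = 0)
    (n : ℕ) (t : Fin n → ℝ) :
    (((n * d : ℕ) : ℤ) < |(l : ℤ) - (l' : ℤ)| →
      (inner ℂ φ (Matrix.toEuclideanCLM (𝕜 := ℂ)
        ((List.ofFn fun k => interactionPicture A B (t k)).prod) ψ) : ℂ) = 0) ∧
    ‖(inner ℂ φ (Matrix.toEuclideanCLM (𝕜 := ℂ)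
        ((List.ofFn fun k => interactionPicture A B (t k)).prod) ψ) : ℂ)‖ ≤
      ‖Matrix.toEuclideanCLM (𝕜 := ℂ) B‖ ^ n := by
  have hgen := interaction_picture_amplitude_bound_general deg d A B hA
    (HasPropagationLE.zero_iff.2 hAdeg) (HasPropagationLE.natCast_iff.2 hBdeg) φ ψ n t
  refine ⟨fun hlt => hgen.1 fun j k hj hk => ?_,
    by simpa only [hφ, hψ, one_mul, mul_one] using hgen.2⟩
  rw [not_imp_comm.1 (hφsupp j) hj, not_imp_comm.1 (hψsupp k) hk, Nat.dist_eq]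
  exact_mod_cast hlt
end

section
/- With the truncated Fock matrices of Definition 2’s Hamiltonian: for every p ∈ S, the column and the row of f_p indexed by the vacuum configuration 0 (the function n with n_k = 0 for all k) vanish, i.e. (f_p)_{n,0} = 0 and (f_p)_{0,n'} = 0 for all n, n' ∈ B. (This uses Σ_{i∈p} α_{p→i} = 0.) -/
open Finset

/-- Matrix element `⟨a| x̂ |b⟩` of `x̂ = (â + â†)/√2` in the number basis:
`√(max(a,b)/2)` if `|a - b| = 1`, and `0` otherwise. -/
noncomputable def xiElem (a b : ℕ) : ℂ :=
  if a = b + 1 ∨ b = a + 1 then (Real.sqrt ((max a b : ℝ) / 2) : ℂ) else 0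

/-- Matrix element `⟨a| k̂ |b⟩` of `k̂ = 𝕚(â† - â)/√2` in the number basis:
`𝕚 (a - b) √(max(a,b)/2)` if `|a - b| = 1`, and `0` otherwise. -/
noncomputable def kappaElem (a b : ℕ) : ℂ :=
  if a = b + 1 ∨ b = a + 1 then
    Complex.I * ((a : ℂ) - (b : ℂ)) * (Real.sqrt ((max a b : ℝ) / 2) : ℂ)
  else 0

/-- The truncated occupation-number basis: occupation configurations
`n : Fin N → ℕ` with total occupation number `∑ i, n i ≤ m`. -/
abbrev FockBasis (N m : ℕ) := {n : Fin N → ℕ // ∑ i, n i ≤ m}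

instance fockBasisFinite (N m : ℕ) : Finite (FockBasis N m) := by
  have h : ∀ (x : FockBasis N m) (i : Fin N), x.1 i < m + 1 := fun x i =>
    Nat.lt_succ_of_le (le_trans
      (Finset.single_le_sum (f := x.1) (fun _ _ => Nat.zero_le _) (Finset.mem_univ i)) x.2)
  exact Finite.of_injective
    (fun x (i : Fin N) => (⟨x.1 i, h x i⟩ : Fin (m + 1)))
    (fun a b hab => Subtype.ext (funext fun i => congrArg Fin.val (congrFun hab i)))

noncomputable instance fockBasisFintype (N m : ℕ) : Fintype (FockBasis N m) :=
  Fintype.ofFinite _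

/-- The truncated matrix `f_p` of the local term
`∑_{i ∈ p} α_{p→i} k̂_i ∏_{j ∈ p \ {i}} x̂_j` in the occupation-number basis. -/
noncomputable def fockOp (N m : ℕ) (α : Finset (Fin N) → Fin N → ℝ)
    (p : Finset (Fin N)) :
    Matrix (FockBasis N m) (FockBasis N m) ℂ := fun n n' =>
  if ∀ k, k ∉ p → n.1 k = n'.1 k then
    ∑ i ∈ p, (α p i : ℂ) * kappaElem (n.1 i) (n'.1 i) *
      ∏ j ∈ p.erase i, xiElem (n.1 j) (n'.1 j)
  else 0

/-- The truncated Hamiltonian `H_m = ∑_{p ∈ S} f_p`. -/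
noncomputable def fockHam (N m : ℕ) (S : Finset (Finset (Fin N)))
    (α : Finset (Fin N) → Fin N → ℝ) :
    Matrix (FockBasis N m) (FockBasis N m) ℂ :=
  ∑ p ∈ S, fockOp N m α p

theorem xiElem_comm (a b : ℕ) : xiElem a b = xiElem b a := by
  simp only [xiElem, or_comm, max_comm]

theorem xiElem_eq_zero_of_le_of_ne_succ {a b : ℕ} (hle : b ≤ a) (hne : a ≠ b + 1) :
    xiElem a b = 0 :=
  if_neg (by omega)

theorem kappaElem_eq_mul_xiElem (a b : ℕ) :
    kappaElem a b = Complex.I * ((a : ℂ) - b) * xiElem a b := by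
  simp only [kappaElem, xiElem, mul_ite, mul_zero]

section LocalTerm

variable {N m : ℕ} {α : Finset (Fin N) → Fin N → ℝ} {p : Finset (Fin N)}

theorem fockOp_apply (n n' : FockBasis N m) :
    fockOp N m α p n n' =
      if ∀ k, k ∉ p → n.1 k = n'.1 k then
        Complex.I * (∑ i ∈ p, (α p i : ℂ) * ((n.1 i : ℂ) - n'.1 i)) *
          ∏ j ∈ p, xiElem (n.1 j) (n'.1 j)
      else 0 := by
  refine if_congr Iff.rfl ?_ rfl
  rw [mul_sum, sum_mul]
  refine sum_congr rfl fun i hi => ?_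
  rw [kappaElem_eq_mul_xiElem, ← mul_prod_erase p (fun j => xiElem (n.1 j) (n'.1 j)) hi]
  ring

open scoped Matrix in
theorem fockOp_transpose : (fockOp N m α p)ᵀ = -fockOp N m α p := by
  ext n n'
  have hsum : ∑ i ∈ p, (α p i : ℂ) * ((n'.1 i : ℂ) - n.1 i) =
      -∑ i ∈ p, (α p i : ℂ) * ((n.1 i : ℂ) - n'.1 i) := by
    simp only [← sum_neg_distrib, ← mul_neg, neg_sub]
  simp only [Matrix.transpose_apply, Matrix.neg_apply, fockOp_apply, hsum, eq_comm (a := n'.1 _),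
    xiElem_comm (n'.1 _), mul_neg, neg_mul, neg_ite, neg_zero]

theorem fockOp_apply_eq_zero_of_le_on (hα : ∑ i ∈ p, α p i = 0) {n n' : FockBasis N m}
    (hle : ∀ i ∈ p, n'.1 i ≤ n.1 i) : fockOp N m α p n n' = 0 := by
  rw [fockOp_apply, ite_eq_right_iff]
  intro _
  -- A nonzero product of the `x̂` factors forces `n i = n' i + 1` throughout `p`, and then its
  -- coefficient is a multiple of `∑ i ∈ p, α p i`.
  by_cases hstep : ∀ i ∈ p, n.1 i = n'.1 i + 1
  · have hsum : ∑ i ∈ p, (α p i : ℂ) * ((n.1 i : ℂ) - n'.1 i) = 0 := calc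
      _ = ∑ i ∈ p, (α p i : ℂ) := sum_congr rfl fun i hi => by simp [hstep i hi]
      _ = 0 := mod_cast hα
    rw [hsum, mul_zero, zero_mul]
  · push Not at hstep
    obtain ⟨i, hi, hne⟩ := hstep
    rw [prod_eq_zero hi (xiElem_eq_zero_of_le_of_ne_succ (hle i hi) hne), mul_zero]

theorem fockOp_vacuum_row_col_eq_zero_general (hα : ∑ i ∈ p, α p i = 0) {n n' : FockBasis N m}
    (hle : ∀ i ∈ p, n'.1 i ≤ n.1 i) :
    fockOp N m α p n n' = 0 ∧ fockOp N m α p n' n = 0 := by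
  have hzero : fockOp N m α p n n' = 0 := fockOp_apply_eq_zero_of_le_on hα hle
  have hskew : fockOp N m α p n' n = -fockOp N m α p n n' :=
    congrFun₂ fockOp_transpose n n'
  exact ⟨hzero, by rw [hskew, hzero, neg_zero]⟩

end LocalTerm

/-- The column and the row of the truncated local term `f_p`
indexed by the vacuum configuration vanish (this uses `∑_{i ∈ p} α_{p→i} = 0`). -/
theorem fockOp_vacuum_row_col_eq_zero
    (N m d c : ℕ)
    (S : Finset (Finset (Fin N)))
    (α : Finset (Fin N) → Fin N → ℝ)
    (hcard : ∀ p ∈ S, 2 ≤ p.card ∧ p.card ≤ d)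
    (hcover : ∀ i : Fin N, 1 ≤ (S.filter (fun p => i ∈ p)).card ∧
      (S.filter (fun p => i ∈ p)).card ≤ c)
    (hα : ∀ p ∈ S, ∑ i ∈ p, α p i = 0)
    (p : Finset (Fin N)) (hp : p ∈ S)
    (vac : FockBasis N m) (hvac : ∀ k, vac.1 k = 0)
    (n n' : FockBasis N m) :
    fockOp N m α p n vac = 0 ∧ fockOp N m α p vac n' = 0 := by
  have hle (k : FockBasis N m) : ∀ i ∈ p, vac.1 i ≤ k.1 i := fun i _ => by simp [hvac]
  exact ⟨(fockOp_vacuum_row_col_eq_zero_general (hα p hp) (hle n)).1,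
    (fockOp_vacuum_row_col_eq_zero_general (hα p hp) (hle n')).2⟩
end

section
/- With the truncated Fock matrices of Definition 2’s Hamiltonian: for p ∈ S and n, n' ∈ B, if (f_p)_{n,n'} ≠ 0 then n_k = n'_k for all k ∉ p and |n_j − n'_j| = 1 for all j ∈ p; consequently, for any q ∈ S with q ≠ p, (f_p)_{n,n'} ≠ 0 implies (f_q)_{n,n'} = 0, i.e. at most one member of S contributes to any given matrix entry of H_m. -/
open Finset

section Support

theorem ne_zero_or_ne_zero_of_sum_mul_prod_erase_ne_zero {ι R : Type*} [DecidableEq ι]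
    [CommSemiring R] {s : Finset ι} {f g : ι → R}
    (hsum : ∑ i ∈ s, f i * ∏ j ∈ s.erase i, g j ≠ 0) {j : ι} (hj : j ∈ s) :
    f j ≠ 0 ∨ g j ≠ 0 := by
  obtain ⟨i, -, hterm⟩ := exists_ne_zero_of_sum_ne_zero hsum
  obtain rfl | hji := eq_or_ne j i
  · exact .inl (left_ne_zero_of_mul hterm)
  · exact .inr fun hg =>
      right_ne_zero_of_mul hterm (prod_eq_zero (mem_erase.2 ⟨hji, hj⟩) hg)

theorem adjacent_of_xiElem_ne_zero {a b : ℕ} (h : xiElem a b ≠ 0) :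
    a = b + 1 ∨ b = a + 1 :=
  by_contra fun hab => h (if_neg hab)

theorem adjacent_of_kappaElem_ne_zero {a b : ℕ} (h : kappaElem a b ≠ 0) :
    a = b + 1 ∨ b = a + 1 :=
  by_contra fun hab => h (if_neg hab)

variable {N m : ℕ} {α : Finset (Fin N) → Fin N → ℝ} {p : Finset (Fin N)} {n n' : FockBasis N m}

theorem eq_of_fockOp_ne_zero_of_notMem (hne : fockOp N m α p n n' ≠ 0) :
    ∀ k, k ∉ p → n.1 k = n'.1 k :=
  by_contra fun hoff => hne (if_neg hoff)

theorem adjacent_of_fockOp_ne_zero_of_mem (hne : fockOp N m α p n n' ≠ 0) :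
    ∀ j ∈ p, n.1 j = n'.1 j + 1 ∨ n'.1 j = n.1 j + 1 := by
  intro j hj
  rw [fockOp, if_pos (eq_of_fockOp_ne_zero_of_notMem hne)] at hne
  obtain hκ | hξ := ne_zero_or_ne_zero_of_sum_mul_prod_erase_ne_zero hne hj
  · exact adjacent_of_kappaElem_ne_zero (right_ne_zero_of_mul hκ)
  · exact adjacent_of_xiElem_ne_zero hξ

theorem eq_filter_ne_of_fockOp_ne_zero (hne : fockOp N m α p n n' ≠ 0) :
    p = ({k | n.1 k ≠ n'.1 k} : Finset (Fin N)) := by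
  ext k
  rw [mem_filter_univ]
  refine ⟨fun hk heq => ?_, not_imp_comm.1 (eq_of_fockOp_ne_zero_of_notMem hne k)⟩
  have hadj := adjacent_of_fockOp_ne_zero_of_mem hne k hk
  omega

theorem fockOp_ne_zero_support_general (hne : fockOp N m α p n n' ≠ 0) :
    (∀ k, k ∉ p → n.1 k = n'.1 k) ∧
    (∀ j ∈ p, n.1 j = n'.1 j + 1 ∨ n'.1 j = n.1 j + 1) ∧
    (∀ q, q ≠ p → fockOp N m α q n n' = 0) := by
  refine ⟨eq_of_fockOp_ne_zero_of_notMem hne, adjacent_of_fockOp_ne_zero_of_mem hne,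
    fun q hqp => by_contra fun hq => hqp ?_⟩
  calc
    q = ({k | n.1 k ≠ n'.1 k} : Finset (Fin N)) := eq_filter_ne_of_fockOp_ne_zero hq
    _ = p := (eq_filter_ne_of_fockOp_ne_zero hne).symm

end Support

/-- If the `(n, n')` entry of the truncated local term `f_p` is nonzero,
then `n` and `n'` agree outside `p` and differ by exactly one at every site of `p`;
consequently at most one member of `S` contributes to any given matrix entry of `H_m`. -/
theorem fockOp_ne_zero_support
    (N m d c : ℕ)
    (S : Finset (Finset (Fin N)))
    (α : Finset (Fin N) → Fin N → ℝ)
    (hcard : ∀ p ∈ S, 2 ≤ p.card ∧ p.card ≤ d)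
    (hcover : ∀ i : Fin N, 1 ≤ (S.filter (fun p => i ∈ p)).card ∧
      (S.filter (fun p => i ∈ p)).card ≤ c)
    (hα : ∀ p ∈ S, ∑ i ∈ p, α p i = 0)
    (p : Finset (Fin N)) (hp : p ∈ S)
    (n n' : FockBasis N m) (hne : fockOp N m α p n n' ≠ 0) :
    (∀ k, k ∉ p → n.1 k = n'.1 k) ∧
    (∀ j ∈ p, n.1 j = n'.1 j + 1 ∨ n'.1 j = n.1 j + 1) ∧
    (∀ q ∈ S, q ≠ p → fockOp N m α q n n' = 0) := by
  obtain ⟨hoff, hon, hunique⟩ := fockOp_ne_zero_support_general hne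
  exact ⟨hoff, hon, fun q _ => hunique q⟩
end

section
/- With the truncated Fock matrices of Definition 2’s Hamiltonian: if p ∈ S has exactly two elements, p = {i, j} with i ≠ j (so that α_{p→j} = −α_{p→i}), then f_p conserves the total occupation number: (f_p)_{n,n'} = 0 whenever Σ_k n_k ≠ Σ_k n'_k. -/
open Finset

/-!
Since `κ(a, b) = 𝕚 (a - b) ξ(a, b)`, an entry of `f_p` factors as
`𝕚 (∑_{i ∈ p} α_{p→i} δ_i) ∏_{i ∈ p} ξ(n_i, n'_i)` with `δ_i = n_i - n'_i`. If it is nonzero, then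
every `δ_i` is `±1`, and both signs occur, since a constant `δ` would make the weighted sum a
multiple of `∑_{i ∈ p} α_{p→i} = 0`. Hence `|∑_{i ∈ p} δ_i| ≤ |p| - 2`, which is `0` for a pair.
-/

section SignSums

variable {ι R : Type*} [CommRing R] [LinearOrder R] [IsStrictOrderedRing R]
  {s : Finset ι} {δ : ι → R}

theorem sum_add_two_le_card_of_le_neg_one (hδ : ∀ k ∈ s, δ k ≤ 1) {j : ι} (hj : j ∈ s)
    (hδj : δ j ≤ -1) : ∑ k ∈ s, δ k + 2 ≤ (#s : R) := by
  have hsum : ∑ k ∈ s, (1 - δ k) = #s - ∑ k ∈ s, δ k := by simp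
  have hterm : 1 - δ j ≤ ∑ k ∈ s, (1 - δ k) :=
    single_le_sum (f := fun k => 1 - δ k) (fun k hk => sub_nonneg.mpr (hδ k hk)) hj
  linarith

theorem exists_forall_eq_of_card_lt_abs_sum_add_two (hδ : ∀ k ∈ s, |δ k| = 1)
    (hcard : (#s : R) < |∑ k ∈ s, δ k| + 2) : ∃ e, ∀ k ∈ s, δ k = e := by
  by_contra! hne
  obtain ⟨i, hi, hi_ne⟩ := hne (-1)
  obtain ⟨j, hj, hj_ne⟩ := hne 1
  have hδi : δ i = 1 := (eq_or_eq_neg_of_abs_eq (hδ i hi)).resolve_right hi_ne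
  have hδj : δ j = -1 := (eq_or_eq_neg_of_abs_eq (hδ j hj)).resolve_left hj_ne
  have hupper : ∑ k ∈ s, δ k + 2 ≤ (#s : R) :=
    sum_add_two_le_card_of_le_neg_one (fun k hk => (le_abs_self _).trans_eq (hδ k hk)) hj hδj.le
  have hlower : ∑ k ∈ s, -δ k + 2 ≤ (#s : R) :=
    sum_add_two_le_card_of_le_neg_one (fun k hk => (neg_le_abs _).trans_eq (hδ k hk)) hi
      (neg_le_neg hδi.ge)
  rw [sum_neg_distrib] at hlower
  rcases abs_choice (∑ k ∈ s, δ k) with h | h <;> linarith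

end SignSums

theorem sum_univ_sub_sum_univ_of_eq_off {ι G : Type*} [Fintype ι] [AddCommGroup G] {s : Finset ι}
    {f g : ι → G} (h : ∀ k ∉ s, f k = g k) :
    ∑ k, f k - ∑ k, g k = ∑ k ∈ s, (f k - g k) := by
  rw [← sum_sub_distrib]
  exact (sum_subset (subset_univ s) fun k _ hk => sub_eq_zero.mpr (h k hk)).symm

theorem abs_sub_eq_one_of_xiElem_ne_zero {a b : ℕ} (h : xiElem a b ≠ 0) :
    |(a : ℤ) - b| = 1 := by
  have hadj : a = b + 1 ∨ b = a + 1 := by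
    by_contra hadj
    exact h (if_neg hadj)
  rcases hadj with rfl | rfl <;> simp

section FockOp

variable {N m : ℕ} {α : Finset (Fin N) → Fin N → ℝ} {p : Finset (Fin N)} {n n' : FockBasis N m}

theorem eq_off_of_fockOp_ne_zero (h : fockOp N m α p n n' ≠ 0) : ∀ k ∉ p, n.1 k = n'.1 k := by
  by_contra hoff
  exact h (if_neg hoff)

theorem fockOp_eq_mul_prod_xiElem (hoff : ∀ k ∉ p, n.1 k = n'.1 k) :
    fockOp N m α p n n' =
      Complex.I * (∑ i ∈ p, (α p i : ℂ) * ((n.1 i : ℤ) - n'.1 i : ℤ)) *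
        ∏ i ∈ p, xiElem (n.1 i) (n'.1 i) := by
  rw [fockOp, if_pos hoff, mul_sum, sum_mul]
  refine sum_congr rfl fun i hi => ?_
  rw [kappaElem_eq_mul_xiElem, ← mul_prod_erase p (fun k => xiElem (n.1 k) (n'.1 k)) hi]
  push_cast
  ring

theorem abs_sub_eq_one_of_fockOp_ne_zero (h : fockOp N m α p n n' ≠ 0) :
    ∀ i ∈ p, |(n.1 i : ℤ) - n'.1 i| = 1 := by
  rw [fockOp_eq_mul_prod_xiElem (eq_off_of_fockOp_ne_zero h)] at h
  exact fun i hi =>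
    abs_sub_eq_one_of_xiElem_ne_zero (prod_ne_zero_iff.mp (right_ne_zero_of_mul h) i hi)

theorem fockOp_eq_zero_of_sub_eq_const (hα : ∑ i ∈ p, α p i = 0) {e : ℤ}
    (he : ∀ i ∈ p, (n.1 i : ℤ) - n'.1 i = e) : fockOp N m α p n n' = 0 := by
  by_contra h
  have hweights : ∑ i ∈ p, (α p i : ℂ) * ((n.1 i : ℤ) - n'.1 i : ℤ) = 0 := by
    calc ∑ i ∈ p, (α p i : ℂ) * ((n.1 i : ℤ) - n'.1 i : ℤ)
        = ∑ i ∈ p, (α p i : ℂ) * (e : ℂ) := sum_congr rfl fun i hi => by rw [he i hi]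
      _ = ((∑ i ∈ p, α p i : ℝ) : ℂ) * e := by rw [← sum_mul, Complex.ofReal_sum]
      _ = 0 := by rw [hα, Complex.ofReal_zero, zero_mul]
  apply h
  rw [fockOp_eq_mul_prod_xiElem (eq_off_of_fockOp_ne_zero h), hweights, mul_zero, zero_mul]

theorem fockOp_pair_conserves_total_occupation_general (hα : ∑ i ∈ p, α p i = 0)
    (hsum : (#p : ℤ) < |∑ k, (n.1 k : ℤ) - ∑ k, (n'.1 k : ℤ)| + 2) :
    fockOp N m α p n n' = 0 := by
  by_contra h
  have hoff : ∀ k ∉ p, (n.1 k : ℤ) = n'.1 k := fun k hk =>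
    congrArg Nat.cast (eq_off_of_fockOp_ne_zero h k hk)
  rw [sum_univ_sub_sum_univ_of_eq_off hoff] at hsum
  obtain ⟨e, he⟩ :=
    exists_forall_eq_of_card_lt_abs_sum_add_two (abs_sub_eq_one_of_fockOp_ne_zero h) hsum
  exact h (fockOp_eq_zero_of_sub_eq_const hα he)

end FockOp

/-- If `p = {i, j}` with `i ≠ j` (so `α_{p→j} = -α_{p→i}`),
the truncated local term `f_p` conserves the total occupation number:
`(f_p)_{n,n'} = 0` whenever `∑ k, n k ≠ ∑ k, n' k`. -/
theorem fockOp_pair_conserves_total_occupation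
    (N m d c : ℕ)
    (S : Finset (Finset (Fin N)))
    (α : Finset (Fin N) → Fin N → ℝ)
    (hcard : ∀ p ∈ S, 2 ≤ p.card ∧ p.card ≤ d)
    (hcover : ∀ i : Fin N, 1 ≤ (S.filter (fun p => i ∈ p)).card ∧
      (S.filter (fun p => i ∈ p)).card ≤ c)
    (hα : ∀ p ∈ S, ∑ i ∈ p, α p i = 0)
    (p : Finset (Fin N)) (hp : p ∈ S)
    (i j : Fin N) (hij : i ≠ j) (hpij : p = {i, j})
    (n n' : FockBasis N m) (hsum : ∑ k, n.1 k ≠ ∑ k, n'.1 k) :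
    fockOp N m α p n n' = 0 := by
  have hchange : 0 < |∑ k, (n.1 k : ℤ) - ∑ k, (n'.1 k : ℤ)| :=
    abs_pos.mpr (sub_ne_zero.mpr (mod_cast hsum))
  exact fockOp_pair_conserves_total_occupation_general (hα p hp)
    (by simpa [hpij, card_pair hij] using hchange)
end

section
/- Unranking step for multiset combinations (core of Lemma 4): let N ≥ 0 and m ≥ 1 be natural numbers and let M = C(N+m, m) (binomial coefficient, the number of multisets of size m from N+1 symbols). Then for every natural number i with i < M, there exists a unique a ∈ {0, 1, …, N} such that C(N+m−a−1, m) ≤ i < C(N+m−a, m); equivalently, the N+1 intervals [C(N+m−a−1, m), C(N+m−a, m)) for a = 0, …, N are pairwise disjoint, nonempty, and their union is {0, 1, …, M−1}. (Here C(m−1, m) = 0.) -/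
section AntitoneIntervals

variable {α β : Type*} [LinearOrder α] [SuccOrder α] {f : α → β}

theorem eq_of_mem_Ico_map_succ_of_antitone [Preorder β] (hf : Antitone f)
    {a b : α} {x : β} (ha : x ∈ Set.Ico (f (Order.succ a)) (f a))
    (hb : x ∈ Set.Ico (f (Order.succ b)) (f b)) :
    a = b :=
  hf.pairwise_disjoint_on_Ico_succ.eq (Set.not_disjoint_iff.mpr ⟨x, ha, hb⟩)

theorem biUnion_Ico_Ico_map_succ_of_antitone [IsSuccArchimedean α] [LinearOrder β]
    (hf : Antitone f) (a b : α) :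
    ⋃ c ∈ Set.Ico a b, Set.Ico (f (Order.succ c)) (f c) = Set.Ico (f b) (f a) := by
  -- Reversing the order on `β` makes `f` monotone and turns `Set.Ioc` into `Set.Ico`.
  apply OrderDual.ofDual.surjective.preimage_injective
  simpa only [Set.preimage_iUnion, Function.comp_apply, Set.Ioc_toDual] using
    hf.dual_right.biUnion_Ico_Ioc_map_succ a b

theorem existsUnique_mem_Ico_map_succ_of_antitone [IsSuccArchimedean α] [LinearOrder β]
    (hf : Antitone f) {a b : α} {x : β} (hx : x ∈ Set.Ico (f b) (f a)) :
    ∃! c, c ∈ Set.Ico a b ∧ x ∈ Set.Ico (f (Order.succ c)) (f c) := by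
  rw [← biUnion_Ico_Ico_map_succ_of_antitone hf a b] at hx
  obtain ⟨c, hc, hxc⟩ := Set.mem_iUnion₂.mp hx
  exact ⟨c, ⟨hc, hxc⟩, fun d hd ↦ eq_of_mem_Ico_map_succ_of_antitone hf hd.2 hxc⟩

end AntitoneIntervals

theorem antitone_choose_sub (n k : ℕ) : Antitone fun a ↦ (n - a).choose k :=
  (Nat.choose_mono k).comp_antitone fun _ _ hab ↦ Nat.sub_le_sub_left hab n

/-- unranking step for multiset combinations, core of Lemma 4 of the
paper.  For `m ≥ 1` and any index `i < C(N+m, m)`, there is a unique `a ∈ {0, …, N}`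
with `C(N+m-a-1, m) ≤ i < C(N+m-a, m)`; i.e. the `N+1` intervals
`[C(N+m-a-1, m), C(N+m-a, m))` are pairwise disjoint, nonempty, and partition
`{0, …, C(N+m, m) - 1}`.  (Here `C(m-1, m) = 0`.) -/
theorem multiset_combination_unranking_step
    (N m : ℕ) (hm : 1 ≤ m) (i : ℕ) (hi : i < (N + m).choose m) :
    ∃! a : ℕ, a ≤ N ∧ (N + m - a - 1).choose m ≤ i ∧ i < (N + m - a).choose m := by
  have choose_last : (N + m - (N + 1)).choose m = 0 := Nat.choose_eq_zero_of_lt (by omega)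
  have i_mem : i ∈ Set.Ico ((N + m - (N + 1)).choose m) ((N + m - 0).choose m) :=
    ⟨choose_last ▸ i.zero_le, hi⟩
  simpa only [Set.mem_Ico, Nat.zero_le, true_and, Order.lt_add_one_iff, Order.succ_eq_add_one,
    Nat.sub_add_eq]
    using existsUnique_mem_Ico_map_succ_of_antitone (antitone_choose_sub (N + m) m) i_mem
end
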